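/- arXiv:2307.01912 — 4 statements merged into one kernel-verified Lean document; each statement's English description precedes it below -/
import Mathlib

section
/- Let n, m be natural numbers and let x be an integer with x + m ≥ 0. Assume that x + 2i - j ≠ 0 for all integers i, j with 1 ≤ i ≤ n and 1 ≤ j ≤ m. Then the determinant of the n×n rational matrix T_{n,m}(x) whose (i,j)-entry (for 0 ≤ i, j ≤ n-1) is C(x+m, j-i+m) − C(x+m, m-i-j-1) equals ∏_{i=1}^{n} ∏_{j=1}^{m} ((x+i-j)(x+2i+j-2)) / ((x+2i-j)(i+j-1)). -/
/-- `C N k` : the binomial coefficient `C(N,k)` for `N : ℕ` and `k : ℤ`,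
with the convention that it is `0` when `k < 0` or `k > N`, as a rational. -/
def C (N : ℕ) (k : ℤ) : ℚ := if 0 ≤ k then (N.choose k.toNat : ℚ) else 0

/-!
Adding multiples of earlier columns to later ones, with the ballot numbers as coefficients, turns
column `j` into `C(x+m+2j, m-i+j) - C(x+m+2j, m-i+j-1)`. For `x = e + m` with `e` a natural number
this entry is a factor depending on `i` alone, times a factor depending on `j` alone, times
`(j+m)(j+m-1)⋯(j+m-i+1)` (a Newton basis polynomial of degree `i` in `j`), times a polynomial `pᵢ`
in `j` of degree `n-1-i`. Expanding `pᵢ` by repeated division shows that such a determinant is the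
Vandermonde determinant times the product of the values of `pᵢ` at the next node, `j = i-m`, as in
Krattenthaler's determinant lemma.

In the resulting product of factorials, listing `0, …, 2n-1` by halves or by parity gives
`∏ (a+i)! (a+n+i)! = ∏ (a+2i)! (a+2i+1)!`; with `a = e` and `a = e + m` this yields the product
formula. Once denominators are cleared both sides are polynomials in `x`, so their agreement at all
natural numbers `x ≥ m` gives the formula everywhere, with no case distinction on vanishing factors.
-/

open Finset Matrix
open Polynomial (X)
open scoped Nat Polynomial

section Krattenthaler

variable {R : Type*} [CommRing R]

/-- The Newton basis polynomials `(X - b₀)(X - b₁) ⋯ (X - bₖ₋₁)`. -/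
noncomputable def newtonBasis (b : ℕ → R) (k : ℕ) : R[X] :=
  ∏ l ∈ range k, (X - Polynomial.C (b l))

theorem newtonBasis_succ (b : ℕ → R) (k : ℕ) :
    newtonBasis b (k + 1) = newtonBasis b k * (X - Polynomial.C (b k)) :=
  prod_range_succ _ k

theorem newtonBasis_monic (b : ℕ → R) (k : ℕ) : (newtonBasis b k).Monic :=
  Polynomial.monic_prod_of_monic _ _ fun _ _ => Polynomial.monic_X_sub_C _

theorem natDegree_newtonBasis [Nontrivial R] (b : ℕ → R) (k : ℕ) :
    (newtonBasis b k).natDegree = k := by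
  simp [newtonBasis, Polynomial.natDegree_prod_of_monic _ _
    fun l _ => Polynomial.monic_X_sub_C (b l)]

theorem det_eval_newtonBasis {n : ℕ} (b : ℕ → R) (v : Fin n → R) :
    (of fun i j : Fin n => (newtonBasis b i).eval (v j)).det = (vandermonde v).det := by
  nontriviality R
  rw [det_eval_matrixOfPolynomials_eq_det_vandermonde v (fun i => newtonBasis b i)
    (fun i => natDegree_newtonBasis b i) (fun i => newtonBasis_monic b i), ← det_transpose]
  rfl

theorem exists_newtonBasis_mul_eq_sum (b : ℕ → R) {d : ℕ} {p : R[X]} (hp : p.natDegree ≤ d)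
    (i : ℕ) : ∃ c : ℕ → R, c i = p.eval (b i) ∧
      newtonBasis b i * p = ∑ k ∈ Ico i (i + d + 1), Polynomial.C (c k) * newtonBasis b k := by
  induction d generalizing p i with
  | zero =>
    refine ⟨fun _ => p.eval (b i), rfl, ?_⟩
    rw [Polynomial.eq_C_of_natDegree_le_zero hp]
    simp [mul_comm]
  | succ d ih =>
    set q := p /ₘ (X - Polynomial.C (b i))
    have hq : q.natDegree ≤ d := by
      nontriviality R
      rw [Polynomial.natDegree_divByMonic _ (Polynomial.monic_X_sub_C _),
        Polynomial.natDegree_X_sub_C]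
      omega
    obtain ⟨c, -, hc⟩ := ih hq (i + 1)
    refine ⟨Function.update c i (p.eval (b i)), Function.update_self .., ?_⟩
    have hpq : p = Polynomial.C (p.eval (b i)) + (X - Polynomial.C (b i)) * q := by
      rw [← Polynomial.modByMonic_X_sub_C_eq_C_eval, Polynomial.modByMonic_add_div]
    have htail : ∑ k ∈ Ico (i + 1) (i + (d + 1) + 1),
          Polynomial.C (Function.update c i (p.eval (b i)) k) * newtonBasis b k =
        newtonBasis b (i + 1) * q := by
      rw [hc, show i + (d + 1) + 1 = i + 1 + d + 1 by ring]
      refine sum_congr rfl fun k hk => ?_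
      rw [Function.update_of_ne (by grind)]
    rw [sum_eq_sum_Ico_succ_bot (by omega), htail, Function.update_self, newtonBasis_succ]
    conv_lhs => rw [hpq]
    ring

theorem det_eval_newtonBasis_mul {n : ℕ} (b : ℕ → R) (p : Fin n → R[X])
    (hp : ∀ i, (p i).natDegree + i < n) (v : Fin n → R) :
    (of fun i j : Fin n => (newtonBasis b i * p i).eval (v j)).det =
      (∏ i, (p i).eval (b i)) * (vandermonde v).det := by
  choose c hdiag hexp using fun i : Fin n =>
    exists_newtonBasis_mul_eq_sum b (Nat.le_sub_of_add_le (Nat.le_sub_one_of_lt (hp i))) i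
  let L : Matrix (Fin n) (Fin n) R := of fun i k => if i ≤ k then c i k else 0
  have hfactor : (of fun i j : Fin n => (newtonBasis b i * p i).eval (v j)) =
      L * of fun k j : Fin n => (newtonBasis b k).eval (v j) := by
    ext i j
    have hIco : Ico (i : ℕ) (i + (n - 1 - i) + 1) = {k ∈ range n | (i : ℕ) ≤ k} := by grind
    rw [of_apply, hexp, hIco, sum_filter, ← Fin.sum_univ_eq_sum_range
      (fun k => if (i : ℕ) ≤ k then Polynomial.C (c i k) * newtonBasis b k else 0),
      Polynomial.eval_finsetSum, mul_apply]
    refine sum_congr rfl fun k _ => ?_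
    simp only [L, of_apply, Fin.le_def]
    split_ifs <;> simp
  have hL : L.IsUpperTriangular := fun i k hki => if_neg (not_le.mpr hki)
  rw [hfactor, det_mul, det_of_isUpperTriangular hL, det_eval_newtonBasis]
  simp [L, hdiag]

theorem det_vandermonde_natCast (n : ℕ) :
    (vandermonde fun j : Fin n => (j : R)).det = ∏ i ∈ range n, (i ! : R) := by
  cases n with
  | zero => simp
  | succ n =>
    rw [det_vandermonde_id_eq_superFactorial, ← Nat.prod_range_succ_factorial, Nat.cast_prod]

end Krattenthaler

section Ballot

variable {R : Type*} [CommRing R]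

/-- The Catalan triangle of ballot numbers `C(2j, j-k) - C(2j, j-k-1)`, given by the recursion in
`j` that comes from applying the operator `g ↦ g (· + 1) + 2 g + g (· - 1)` to functions `g` on `ℤ`
with `g (-1 - k) = -g k`. -/
def ballot : ℕ → ℕ → ℕ
  | 0, 0 => 1
  | 0, _ + 1 => 0
  | j + 1, 0 => ballot j 0 + ballot j 1
  | j + 1, k + 1 => ballot j k + 2 * ballot j (k + 1) + ballot j (k + 2)

theorem ballot_eq_zero_of_lt {j k : ℕ} (h : j < k) : ballot j k = 0 := by
  induction j generalizing k with
  | zero => cases k with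
    | zero => omega
    | succ k => rfl
  | succ j ih => cases k with
    | zero => omega
    | succ k => simp [ballot, ih (show j < k by omega), ih (show j < k + 1 by omega),
        ih (show j < k + 2 by omega)]

theorem ballot_self (j : ℕ) : ballot j j = 1 := by
  induction j with
  | zero => rfl
  | succ j ih => simp [ballot, ih, ballot_eq_zero_of_lt]

theorem sum_ballot_mul_by_parts (g : ℤ → R) (hg : g (-1) = -g 0) (j n : ℕ) :
    ∑ k ∈ range (n + 1), (ballot j k : R) * (g (k + 1) + 2 * g k + g (k - 1)) =
      ∑ k ∈ range (n + 1), (ballot (j + 1) k : R) * g k +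
        (ballot j n * g (n + 1) - ballot j (n + 1) * g n) := by
  induction n with
  | zero =>
    simp only [zero_add, sum_range_one, ballot, Nat.cast_zero, Nat.cast_add, zero_sub, hg]
    ring
  | succ n ih =>
    rw [sum_range_succ, ih, sum_range_succ _ (n + 1)]
    simp only [ballot]
    push_cast
    rw [add_sub_cancel_right]
    ring

theorem sum_ballot_succ_mul (g : ℤ → R) (hg : g (-1) = -g 0) {j n : ℕ} (hj : j + 1 < n) :
    ∑ k ∈ range n, (ballot (j + 1) k : R) * g k =
      ∑ k ∈ range n, (ballot j k : R) * (g (k + 1) + 2 * g k + g (k - 1)) := by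
  obtain ⟨n, rfl⟩ := Nat.exists_eq_succ_of_ne_zero (Nat.ne_zero_of_lt hj)
  simp [sum_ballot_mul_by_parts g hg, ballot_eq_zero_of_lt (show j < n by omega),
    ballot_eq_zero_of_lt (show j < n + 1 by omega)]

end Ballot

section Binom

variable {R : Type*} [CommRing R] [BinomialRing R]

/-- The binomial coefficient with lower index in `ℤ`, zero when that index is negative.  Unlike
`C`, the upper index is arbitrary, which makes the coefficient a polynomial in it. -/
def binom (a : R) (k : ℤ) : R := if 0 ≤ k then Ring.choose a k.toNat else 0

theorem binom_natCast_right (a : R) (k : ℕ) : binom a k = Ring.choose a k := by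
  simp [binom]

theorem binom_of_neg (a : R) {k : ℤ} (hk : k < 0) : binom a k = 0 :=
  if_neg hk.not_ge

theorem binom_natCast_left (N : ℕ) (k : ℤ) : binom (N : ℚ) k = C N k := by
  simp only [binom, C, Ring.choose_natCast]

theorem map_binom {S : Type*} [CommRing S] [BinomialRing S] (f : R →+* S) (a : R) (k : ℤ) :
    f (binom a k) = binom (f a) k := by
  simp only [binom, apply_ite f, Ring.map_choose, map_zero]

theorem binom_add_one (a : R) (k : ℤ) : binom (a + 1) k = binom a k + binom a (k - 1) := by
  rcases k with (_ | k) | k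
  · simp [binom]
  · rw [Int.ofNat_eq_natCast, show ((k + 1 : ℕ) : ℤ) - 1 = k by simp]
    simp only [binom_natCast_right, Ring.choose_succ_succ, add_comm]
  · simp [binom_of_neg, Int.negSucc_lt_zero, Int.negSucc_sub_one]

theorem binom_add_two (a : R) (k : ℤ) :
    binom (a + 2) k = binom a k + 2 * binom a (k - 1) + binom a (k - 2) := by
  rw [show a + 2 = a + 1 + 1 by ring, binom_add_one, binom_add_one, binom_add_one,
    show k - 1 - 1 = k - 2 by ring]
  ring

theorem sum_ballot_mul_binom_sub (a : R) (s : ℤ) {j n : ℕ} (hj : j < n) :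
    ∑ k ∈ range n, (ballot j k : R) * (binom a (s + k) - binom a (s - k - 1)) =
      binom (a + 2 * j) (s + j) - binom (a + 2 * j) (s + j - 1) := by
  induction j generalizing a s with
  | zero =>
    rw [sum_eq_single_of_mem 0 (mem_range.mpr hj)]
    · simp [ballot]
    · intro k _ hk
      simp [ballot_eq_zero_of_lt (Nat.pos_of_ne_zero hk)]
  | succ j ih =>
    let g : ℤ → R := fun k => binom a (s + k) - binom a (s - k - 1)
    have hg : g (-1) = -g 0 := by simp [g, sub_eq_add_neg]
    have hshift (k : ℤ) : g (k + 1) + 2 * g k + g (k - 1) =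
        binom (a + 2) (s + 1 + k) - binom (a + 2) (s + 1 - k - 1) := by
      simp only [g, binom_add_two]
      ring_nf
    calc ∑ k ∈ range n, (ballot (j + 1) k : R) * g k
      _ = ∑ k ∈ range n, (ballot j k : R) *
            (binom (a + 2) (s + 1 + k) - binom (a + 2) (s + 1 - k - 1)) := by
        simp only [sum_ballot_succ_mul g hg hj, hshift]
      _ = _ := by
        rw [ih (a + 2) (s + 1) (by omega)]
        push_cast
        ring_nf

end Binom

section Matrix

variable {R : Type*} [CommRing R] [BinomialRing R]

/-- The matrix `T_{n,m}(x)`, with `x` in an arbitrary binomial ring. -/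
def T (n m : ℕ) (x : R) : Matrix (Fin n) (Fin n) R :=
  of fun i j => binom (x + m) ((j : ℤ) - i + m) - binom (x + m) ((m : ℤ) - i - j - 1)

theorem map_T {S : Type*} [CommRing S] [BinomialRing S] (f : R →+* S) (n m : ℕ) (x : R) :
    f.mapMatrix (T n m x) = T n m (f x) := by
  ext i j
  simp [T, map_binom]

theorem T_intCast (n m : ℕ) {x : ℤ} (hx : 0 ≤ x + m) :
    T n m (x : ℚ) = of fun i j : Fin n =>
      C (x + m).toNat ((j : ℤ) - i + m) - C (x + m).toNat ((m : ℤ) - i - j - 1) := by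
  have hN : (x : ℚ) + m = ((x + m).toNat : ℚ) := by
    rw [← Int.cast_natCast (x + m).toNat, Int.toNat_of_nonneg hx]
    push_cast
    rfl
  ext i j
  simp only [T, hN, binom_natCast_left]

theorem det_T_eq_det_binom_sub (n m : ℕ) (x : R) :
    (T n m x).det = (of fun i j : Fin n =>
      binom (x + m + 2 * j) ((m : ℤ) - i + j) -
        binom (x + m + 2 * j) ((m : ℤ) - i + j - 1)).det := by
  let U : Matrix (Fin n) (Fin n) R := of fun k j => (ballot j k : R)
  have hU : U.IsUpperTriangular := fun k j (hjk : j < k) => by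
    simp [U, ballot_eq_zero_of_lt hjk]
  have hdet : U.det = 1 := by simp [det_of_isUpperTriangular hU, U, ballot_self]
  rw [← mul_one (T n m x).det, ← hdet, ← det_mul]
  congr 1
  ext i j
  rw [of_apply, ← sum_ballot_mul_binom_sub (x + m) (m - i) j.isLt, ← Fin.sum_univ_eq_sum_range
    (fun k => (ballot j k : R) *
      (binom (x + m) ((m : ℤ) - i + k) - binom (x + m) ((m : ℤ) - i - k - 1))), mul_apply]
  refine sum_congr rfl fun k _ => ?_
  simp only [T, U, of_apply]
  rw [mul_comm, show (k : ℤ) - i + m = m - i + k by ring]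

end Matrix

theorem binom_natCast_sub_binom (q r : ℕ) :
    binom ((q + r : ℕ) : ℚ) q - binom ((q + r : ℕ) : ℚ) (q - 1) =
      (r + 1 - q) * ((q + r)! / (q ! * (r + 1)!)) := by
  rw [binom_natCast_right, Ring.choose_natCast, Nat.cast_add_choose]
  cases q with
  | zero =>
    rw [binom_of_neg _ (by simp)]
    field_simp
    simp only [Nat.factorial_succ]
    push_cast
    ring
  | succ q =>
    rw [Nat.cast_succ, add_sub_cancel_right, binom_natCast_right, Ring.choose_natCast,
      Nat.add_right_comm, add_assoc, Nat.cast_add_choose]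
    simp only [Nat.factorial_succ]
    push_cast
    field_simp

theorem binom_sub_binom_eq (e m : ℕ) {n i : ℕ} (hi : i < n) (j : ℕ) :
    binom ((e + 2 * m + 2 * j : ℕ) : ℚ) ((m : ℤ) - i + j) -
        binom ((e + 2 * m + 2 * j : ℕ) : ℚ) ((m : ℤ) - i + j - 1) =
      (e + 2 * i + 1) * ((e + 2 * m + 2 * j)! / ((m + j)! * (e + m + n + j)!) *
        ((m + j).descFactorial i * (e + m + i + 2 + j).ascFactorial (n - 1 - i))) := by
  rcases lt_or_ge (m + j) i with hji | hij
  · rw [binom_of_neg _ (by omega), binom_of_neg _ (by omega),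
      Nat.descFactorial_of_lt hji]
    simp
  obtain ⟨q, hq⟩ := Nat.exists_eq_add_of_le' hij
  have hdesc := Nat.factorial_mul_descFactorial hij
  have hasc := Nat.factorial_mul_ascFactorial (e + m + i + j + 1) (n - 1 - i)
  rw [hq, Nat.add_sub_cancel] at hdesc
  rw [show e + m + i + j + 1 + (n - 1 - i) = e + m + n + j by omega] at hasc
  rw [show (m : ℤ) - i + j = q by omega,
    show e + 2 * m + 2 * j = q + (e + m + i + j) by omega, binom_natCast_sub_binom, hq, ← hdesc,
    ← hasc, show e + m + i + 2 + j = e + m + i + j + 1 + 1 by ring]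
  have hdesc_ne : ((q + i).descFactorial i : ℚ) ≠ 0 := by
    exact_mod_cast (Nat.descFactorial_pos.mpr (by omega)).ne'
  have hasc_ne : ((e + m + i + j + 1 + 1).ascFactorial (n - 1 - i) : ℚ) ≠ 0 := by
    exact_mod_cast (Nat.ascFactorial_pos _ _).ne'
  have hqi : (q : ℚ) = m + j - i := by rw [eq_sub_iff_add_eq]; exact_mod_cast hq.symm
  push_cast
  field_simp
  rw [hqi]
  ring

theorem eval_newtonBasis_natCast_sub {R : Type*} [CommRing R] (m i j : ℕ) :
    (newtonBasis (fun l => (l : R) - m) i).eval (j : R) = (m + j).descFactorial i := by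
  rw [← descPochhammer_eval_eq_descFactorial, descPochhammer_eval_eq_prod_range, newtonBasis,
    Polynomial.eval_prod]
  refine prod_congr rfl fun l _ => ?_
  rw [Polynomial.eval_sub, Polynomial.eval_X, Polynomial.eval_C, Nat.cast_add]
  ring

theorem natDegree_ascPochhammer_comp_X_add_C {R : Type*} [CommRing R] [IsDomain R] (d : ℕ) (a : R) :
    ((ascPochhammer R d).comp (X + Polynomial.C a)).natDegree = d := by
  rw [Polynomial.natDegree_comp, Polynomial.natDegree_X_add_C, ascPochhammer_natDegree, mul_one]

theorem eval_ascPochhammer_comp_X_add_C {R : Type*} [CommRing R] (d : ℕ) {a y : R} {c : ℕ}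
    (hc : y + a = c) :
    ((ascPochhammer R d).comp (X + Polynomial.C a)).eval y = c.ascFactorial d := by
  rw [Polynomial.eval_comp, Polynomial.eval_add, Polynomial.eval_X, Polynomial.eval_C, hc,
    ascPochhammer_nat_eq_natCast_ascFactorial]

theorem succ_mul_ascFactorial_eq_div (e : ℕ) {n i : ℕ} (hi : i < n) :
    ((e : ℚ) + 2 * i + 1) * (e + 2 * i + 2).ascFactorial (n - 1 - i) =
      (e + n + i)! / (e + 2 * i)! := by
  have hasc := Nat.factorial_mul_ascFactorial (e + 2 * i + 1) (n - 1 - i)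
  rw [show e + 2 * i + 1 + (n - 1 - i) = e + n + i by omega, Nat.factorial_succ] at hasc
  rw [← hasc, eq_div_iff (by positivity)]
  push_cast
  ring

theorem det_T_natCast (e m n : ℕ) :
    (T n m ((e + m : ℕ) : ℚ)).det = ∏ i ∈ range n, ((e + n + i)! / (e + 2 * i)! : ℚ) *
      ((e + 2 * m + 2 * i)! * i ! / ((m + i)! * (e + m + n + i)!)) := by
  let b : ℕ → ℚ := fun l => l - m
  let p : Fin n → ℚ[X] := fun i =>
    (ascPochhammer ℚ (n - 1 - i)).comp (X + Polynomial.C ((e + m + i + 2 : ℕ) : ℚ))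
  have hdeg (i : Fin n) : (p i).natDegree + i < n := by
    rw [natDegree_ascPochhammer_comp_X_add_C]
    omega
  have hdiag (i : Fin n) :
      ((e : ℚ) + 2 * i + 1) * (p i).eval (b i) = (e + n + i)! / (e + 2 * i)! := by
    rw [← succ_mul_ascFactorial_eq_div e i.isLt, eval_ascPochhammer_comp_X_add_C]
    simp only [b]
    push_cast
    ring
  have hfactor : (of fun i j : Fin n =>
        binom (((e + m : ℕ) : ℚ) + m + 2 * j) ((m : ℤ) - i + j) -
          binom (((e + m : ℕ) : ℚ) + m + 2 * j) ((m : ℤ) - i + j - 1)) =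
      of fun i j : Fin n => ((e : ℚ) + 2 * i + 1) *
        (of fun i j : Fin n => ((e + 2 * m + 2 * j)! / ((m + j)! * (e + m + n + j)!) : ℚ) *
          (of fun i j : Fin n => (newtonBasis b i * p i).eval (j : ℚ)) i j) i j := by
    ext i j
    simp only [of_apply]
    rw [show ((e + m : ℕ) : ℚ) + m + 2 * j = (e + 2 * m + 2 * j : ℕ) by push_cast; ring,
      binom_sub_binom_eq e m i.isLt, Polynomial.eval_mul, eval_newtonBasis_natCast_sub,
      eval_ascPochhammer_comp_X_add_C (c := e + m + i + 2 + j) _ (by push_cast; ring)]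
  rw [det_T_eq_det_binom_sub, hfactor, det_mul_column, det_mul_row,
    det_eval_newtonBasis_mul b p hdeg, det_vandermonde_natCast]
  simp only [← Fin.prod_univ_eq_prod_range, ← prod_mul_distrib]
  refine prod_congr rfl fun i _ => ?_
  rw [← hdiag]
  ring

theorem prod_Icc_one_eq_prod_range {M : Type*} [CommMonoid M] (f : ℕ → M) (n : ℕ) :
    ∏ i ∈ Icc 1 n, f i = ∏ i ∈ range n, f (i + 1) := by
  rw [range_eq_Ico, prod_Ico_add', zero_add, Ico_add_one_right_eq_Icc]

theorem prod_Icc_one_natCast_add {K : Type*} [Field K] [CharZero K] (a m : ℕ) :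
    ∏ j ∈ Icc 1 m, ((a : K) + j) = (a + m)! / a ! := by
  induction m with
  | zero => simp [Nat.factorial_ne_zero]
  | succ m ih =>
    rw [prod_Icc_succ_top (by omega), ih, ← add_assoc, Nat.factorial_succ]
    push_cast
    ring

theorem prod_Icc_one_natCast_add_one_sub {K : Type*} [Field K] [CharZero K] (a m : ℕ) :
    ∏ j ∈ Icc 1 m, ((a : K) + m + 1 - j) = (a + m)! / a ! := by
  rw [← prod_Icc_one_natCast_add, prod_Icc_one_eq_prod_range, ← prod_range_reflect,
    prod_Icc_one_eq_prod_range]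
  refine prod_congr rfl fun j hj => ?_
  have hm : (m : K) = (m - 1 - j : ℕ) + 1 + j := by
    rw [mem_range] at hj
    exact_mod_cast (show m = m - 1 - j + 1 + j by omega)
  push_cast
  linear_combination hm

theorem prod_range_mul_eq_prod_even_mul_odd {M : Type*} [CommMonoid M] (u : ℕ → M) (n : ℕ) :
    ∏ i ∈ range n, u i * u (n + i) = ∏ i ∈ range n, u (2 * i) * u (2 * i + 1) := by
  rw [prod_mul_distrib, ← prod_range_add, ← two_mul]
  induction n with
  | zero => simp
  | succ n ih =>
    rw [show 2 * (n + 1) = 2 * n + 1 + 1 by ring, prod_range_succ, prod_range_succ, ih,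
      prod_range_succ, mul_assoc]

theorem prod_numerator_natCast (e m n : ℕ) :
    ∏ i ∈ Icc 1 n, ∏ j ∈ Icc 1 m, ((((e + m : ℕ) : ℚ) + i - j) *
        (((e + m : ℕ) : ℚ) + 2 * i + j - 2)) =
      ∏ i ∈ range n,
        ((e + m + i)! / (e + i)! * ((e + 2 * m + 2 * i)! / (e + m + 2 * i)!) : ℚ) := by
  rw [prod_Icc_one_eq_prod_range]
  refine prod_congr rfl fun i _ => ?_
  rw [show e + m + i = e + i + m by ring, show e + 2 * m + 2 * i = e + m + 2 * i + m by ring,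
    ← prod_Icc_one_natCast_add_one_sub, ← prod_Icc_one_natCast_add, ← prod_mul_distrib]
  refine prod_congr rfl fun j _ => ?_
  push_cast
  ring

theorem prod_denominator_natCast (e m n : ℕ) :
    ∏ i ∈ Icc 1 n, ∏ j ∈ Icc 1 m, ((((e + m : ℕ) : ℚ) + 2 * i - j) * ((i : ℚ) + j - 1)) =
      ∏ i ∈ range n,
        ((e + m + 2 * i + 1)! / (e + 2 * i + 1)! * ((m + i)! / i !) : ℚ) := by
  rw [prod_Icc_one_eq_prod_range]
  refine prod_congr rfl fun i _ => ?_
  rw [show e + m + 2 * i + 1 = e + 2 * i + 1 + m by ring, add_comm m i,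
    ← prod_Icc_one_natCast_add_one_sub, ← prod_Icc_one_natCast_add, ← prod_mul_distrib]
  refine prod_congr rfl fun j _ => ?_
  push_cast
  ring

theorem det_T_natCast_mul_prod (e m n : ℕ) :
    (T n m ((e + m : ℕ) : ℚ)).det *
        ∏ i ∈ Icc 1 n, ∏ j ∈ Icc 1 m, ((((e + m : ℕ) : ℚ) + 2 * i - j) * ((i : ℚ) + j - 1)) =
      ∏ i ∈ Icc 1 n, ∏ j ∈ Icc 1 m, ((((e + m : ℕ) : ℚ) + i - j) *
        (((e + m : ℕ) : ℚ) + 2 * i + j - 2)) := by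
  have hregroup (a : ℕ) : ∏ i ∈ range n, ((a + i)! * (a + n + i)! : ℚ) =
      ∏ i ∈ range n, ((a + 2 * i)! * (a + 2 * i + 1)! : ℚ) := by
    simpa only [add_assoc] using prod_range_mul_eq_prod_even_mul_odd (fun k => ((a + k)! : ℚ)) n
  rw [det_T_natCast, prod_denominator_natCast, prod_numerator_natCast]
  have he := hregroup e
  have hem := hregroup (e + m)
  simp only [prod_mul_distrib, prod_div_distrib] at he hem ⊢
  have hne (f : ℕ → ℕ) : ∏ i ∈ range n, ((f i)! : ℚ) ≠ 0 :=
    prod_ne_zero_iff.mpr fun i _ => by positivity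
  field_simp [hne]
  linear_combination congrArg₂ (· * ·) he hem.symm

theorem det_T_mul_prod {R : Type*} [CommRing R] [Algebra ℚ R] [BinomialRing R] (n m : ℕ) (x : R) :
    (T n m x).det * ∏ i ∈ Icc 1 n, ∏ j ∈ Icc 1 m, ((x + 2 * i - j) * ((i : R) + j - 1)) =
      ∏ i ∈ Icc 1 n, ∏ j ∈ Icc 1 m, ((x + i - j) * (x + 2 * i + j - 2)) := by
  have hgeneric : (T n m (X : ℚ[X])).det *
        ∏ i ∈ Icc 1 n, ∏ j ∈ Icc 1 m, (((X : ℚ[X]) + 2 * i - j) * ((i : ℚ[X]) + j - 1)) =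
      ∏ i ∈ Icc 1 n, ∏ j ∈ Icc 1 m, (((X : ℚ[X]) + i - j) * ((X : ℚ[X]) + 2 * i + j - 2)) := by
    refine Polynomial.eq_of_infinite_eval_eq _ _ <|
      (Set.infinite_range_of_injective
        (Nat.cast_injective.comp (add_left_injective m) : Function.Injective
          fun e : ℕ => ((e + m : ℕ) : ℚ))).mono ?_
    rintro _ ⟨e, rfl⟩
    have h := det_T_natCast_mul_prod e m n
    simp only [Set.mem_ofPred_eq, Polynomial.eval_mul, Polynomial.eval_prod]
    rw [← Polynomial.coe_evalRingHom, RingHom.map_det, map_T]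
    simpa using h
  have h := congrArg (Polynomial.eval₂RingHom (algebraMap ℚ R) x) hgeneric
  rw [map_mul, RingHom.map_det, map_T] at h
  simpa [map_prod] using h

theorem det_T_eq_general {K : Type*} [Field K] [CharZero K] (n m : ℕ) (x : K)
    (h : ∀ i ∈ Icc 1 n, ∀ j ∈ Icc 1 m, x + 2 * i - j ≠ 0) :
    (T n m x).det = ∏ i ∈ Icc 1 n, ∏ j ∈ Icc 1 m,
      ((x + i - j) * (x + 2 * i + j - 2)) / ((x + 2 * i - j) * (i + j - 1)) := by
  have hden : ∏ i ∈ Icc 1 n, ∏ j ∈ Icc 1 m, ((x + 2 * i - j) * ((i : K) + j - 1)) ≠ 0 := by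
    refine prod_ne_zero_iff.mpr fun i hi => prod_ne_zero_iff.mpr fun j hj =>
      mul_ne_zero (h i hi j hj) ?_
    obtain ⟨i, rfl⟩ := Nat.exists_eq_add_of_le' (mem_Icc.mp hi).1
    rw [Nat.cast_succ, add_right_comm, add_sub_cancel_right]
    exact_mod_cast (show i + j ≠ 0 by grind)
  simp only [prod_div_distrib]
  rw [eq_div_iff hden, det_T_mul_prod]

theorem det_T_eq (n m : ℕ) (x : ℤ) (hx : 0 ≤ x + m)
    (h : ∀ i j : ℤ, 1 ≤ i → i ≤ n → 1 ≤ j → j ≤ m → x + 2 * i - j ≠ 0) :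
    Matrix.det (Matrix.of fun i j : Fin n =>
      C (x + m).toNat ((j : ℤ) - (i : ℤ) + m) -
      C (x + m).toNat ((m : ℤ) - (i : ℤ) - (j : ℤ) - 1)) =
    ∏ i ∈ Finset.Icc 1 n, ∏ j ∈ Finset.Icc 1 m,
      (((x : ℚ) + i - j) * ((x : ℚ) + 2 * i + j - 2)) /
      ((((x : ℚ) + 2 * i - j)) * ((i : ℚ) + j - 1)) := by
  rw [← T_intCast n m hx]
  exact det_T_eq_general n m (x : ℚ) fun i hi j hj =>
    mod_cast h i j (by grind) (by grind) (by grind) (by grind)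
end

section
/- Let n, m be natural numbers with m ≥ 1. Then the determinant of the n×n rational matrix whose (i,j)-entry (for 0 ≤ i, j ≤ n-1) is C(2m, j-i+m) − C(2m, m-i-j-1) equals ∏_{1 ≤ i ≤ j ≤ m-1} (2n+i+j) / (i+j). -/
/-! By the reflection principle the matrix is the `n × n` corner of `J ^ m`, where `J` is the
operator `f ↦ f (i - 1) + 2 f i + f (i + 1)` on sequences extended antisymmetrically about `-1/2`.
It factors as `J = L₀ U₀` with bidiagonal factors, and Rutishauser's quotient-difference algorithm
refactors `U₀ L₀ = L₁ U₁`, `U₁ L₁ = L₂ U₂`, … explicitly. Since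
`(L U) ^ (m + 1) = L (U L) ^ m U`, and corners are multiplicative when the left factor is lower
triangular or the right factor is upper triangular, the determinant is the product of the diagonal
entries of `U₀, …, U_{m - 1}`, which telescopes. -/

section Operators

variable {R : Type*} [CommRing R]

/-- The upper-left `n × n` corner of the infinite matrix of an operator on sequences; column `j` is
the image of the `j`-th unit sequence. -/
def corner (n : ℕ) (T : Module.End R (ℕ → R)) : Matrix (Fin n) (Fin n) R :=
  Matrix.of fun i j => T (Pi.single (j : ℕ) 1) i

/-- The operator whose infinite matrix has diagonal `a` and ones on the superdiagonal. -/
def upperBidiagonal (a : ℕ → R) : Module.End R (ℕ → R) where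
  toFun f i := a i * f i + f (i + 1)
  map_add' f g := by funext i; simp only [Pi.add_apply]; ring
  map_smul' c f := by funext i; simp only [Pi.smul_apply, smul_eq_mul, RingHom.id_apply]; ring

/-- The operator whose infinite matrix has ones on the diagonal and subdiagonal `b`; the entry in
row `i + 1` and column `i` is `b i`. -/
def lowerBidiagonal (b : ℕ → R) : Module.End R (ℕ → R) where
  toFun f
    | 0 => f 0
    | i + 1 => f (i + 1) + b i * f i
  map_add' f g := by funext i; cases i <;> simp only [Pi.add_apply]; ring
  map_smul' c f := by
    funext i; cases i <;> simp only [Pi.smul_apply, smul_eq_mul, RingHom.id_apply]; ring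

lemma upperBidiagonal_apply (a f : ℕ → R) (i : ℕ) :
    upperBidiagonal a f i = a i * f i + f (i + 1) := rfl

lemma lowerBidiagonal_apply_zero (b f : ℕ → R) : lowerBidiagonal b f 0 = f 0 := rfl

lemma lowerBidiagonal_apply_succ (b f : ℕ → R) (i : ℕ) :
    lowerBidiagonal b f (i + 1) = f (i + 1) + b i * f i := rfl

lemma sum_smul_single_apply (n : ℕ) (f : ℕ → R) (i : ℕ) :
    (∑ k : Fin n, f k • (Pi.single (k : ℕ) 1 : ℕ → R)) i = if i < n then f i else 0 := by
  rw [Finset.sum_apply, Fin.sum_univ_eq_sum_range (fun k => (f k • (Pi.single k 1 : ℕ → R)) i)]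
  simp [Pi.single_apply]

lemma corner_one (n : ℕ) : corner n (1 : Module.End R (ℕ → R)) = 1 := by
  ext i j
  simp [corner, Matrix.one_apply, Pi.single_apply, Fin.ext_iff]

lemma corner_mul_corner_apply (n : ℕ) (S T : Module.End R (ℕ → R)) (i j : Fin n) :
    (corner n S * corner n T) i j =
      S (∑ k : Fin n, T (Pi.single (j : ℕ) 1) k • Pi.single (k : ℕ) 1) i := by
  simp [corner, Matrix.mul_apply, mul_comm]

lemma corner_mul_of_lower {n : ℕ} {S : Module.End R (ℕ → R)}
    (hS : ∀ f g, (∀ i < n, f i = g i) → ∀ i < n, S f i = S g i) (T : Module.End R (ℕ → R)) :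
    corner n (S * T) = corner n S * corner n T := by
  ext i j
  rw [corner_mul_corner_apply]
  refine hS _ _ (fun k hk => ?_) i i.isLt
  rw [sum_smul_single_apply, if_pos hk]

lemma corner_mul_of_upper {n : ℕ} (S : Module.End R (ℕ → R)) {T : Module.End R (ℕ → R)}
    (hT : ∀ j < n, ∀ i, n ≤ i → T (Pi.single j 1) i = 0) :
    corner n (S * T) = corner n S * corner n T := by
  ext i j
  rw [corner_mul_corner_apply]
  refine congrFun (congrArg S (funext fun k => ?_)) i
  rw [sum_smul_single_apply]
  split_ifs with hk
  · rfl
  · exact hT j j.isLt k (not_lt.mp hk)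

lemma lowerBidiagonal_congr {n : ℕ} (b : ℕ → R) {f g : ℕ → R} (hfg : ∀ i < n, f i = g i) :
    ∀ i < n, lowerBidiagonal b f i = lowerBidiagonal b g i
  | 0, hi => hfg 0 hi
  | i + 1, hi => by
    rw [lowerBidiagonal_apply_succ, lowerBidiagonal_apply_succ, hfg _ hi, hfg i (by omega)]

lemma lowerBidiagonal_single_of_lt (b : ℕ → R) {i j : ℕ} (hij : i < j) :
    lowerBidiagonal b (Pi.single j 1) i = 0 := by
  have hsingle : ∀ k < j, (Pi.single j 1 : ℕ → R) k = (0 : ℕ → R) k := fun k hk =>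
    Pi.single_eq_of_ne hk.ne 1
  rw [lowerBidiagonal_congr b hsingle i hij, map_zero, Pi.zero_apply]

lemma upperBidiagonal_single_of_lt (a : ℕ → R) {i j : ℕ} (hij : j < i) :
    upperBidiagonal a (Pi.single j 1) i = 0 := by
  simp [upperBidiagonal_apply, hij.ne', (hij.trans i.lt_succ_self).ne']

lemma det_corner_lowerBidiagonal (n : ℕ) (b : ℕ → R) :
    (corner n (lowerBidiagonal b)).det = 1 := by
  rw [Matrix.det_of_isLowerTriangular]
  · refine Finset.prod_eq_one fun i _ => ?_
    rcases i with ⟨_ | i, hi⟩ <;>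
      simp [corner, lowerBidiagonal_apply_zero, lowerBidiagonal_apply_succ]
  · intro i j hij
    exact lowerBidiagonal_single_of_lt b hij

lemma det_corner_upperBidiagonal (n : ℕ) (a : ℕ → R) :
    (corner n (upperBidiagonal a)).det = ∏ k ∈ Finset.range n, a k := by
  rw [Matrix.det_of_isUpperTriangular, ← Fin.prod_univ_eq_prod_range]
  · simp [corner, upperBidiagonal_apply]
  · intro i j hij
    exact upperBidiagonal_single_of_lt a hij

/-- One step `(a, b) ↦ (a', b')` of Rutishauser's quotient-difference algorithm: the rhombus rules,
which say that `(a', b')` are the bidiagonal factors of the product in reversed order. -/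
structure IsQDStep (a b a' b' : ℕ → R) : Prop where
  add_zero : a' 0 = a 0 + b 0
  add_succ (k : ℕ) : a' (k + 1) + b' k = a (k + 1) + b (k + 1)
  mul (k : ℕ) : b' k * a' k = a (k + 1) * b k

lemma IsQDStep.upper_mul_lower {a b a' b' : ℕ → R} (h : IsQDStep a b a' b') :
    upperBidiagonal a * lowerBidiagonal b = lowerBidiagonal b' * upperBidiagonal a' := by
  ext1 f
  funext i
  rcases i with _ | k
  · simp only [Module.End.mul_apply, upperBidiagonal_apply, lowerBidiagonal_apply_zero,
      lowerBidiagonal_apply_succ]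
    linear_combination -f 0 * h.add_zero
  · simp only [Module.End.mul_apply, upperBidiagonal_apply, lowerBidiagonal_apply_succ]
    linear_combination -f (k + 1) * h.add_succ k - f k * h.mul k

lemma det_corner_lower_mul_upper_pow (n m : ℕ) {a b : ℕ → ℕ → R}
    (h : ∀ r, IsQDStep (a r) (b r) (a (r + 1)) (b (r + 1))) :
    (corner n ((lowerBidiagonal (b 0) * upperBidiagonal (a 0)) ^ m)).det =
      ∏ r ∈ Finset.range m, ∏ k ∈ Finset.range n, a r k := by
  induction m generalizing a b with
  | zero => rw [pow_zero, corner_one, Matrix.det_one, Finset.prod_range_zero]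
  | succ m ih =>
    have hpow : (lowerBidiagonal (b 0) * upperBidiagonal (a 0)) ^ (m + 1) =
        lowerBidiagonal (b 0) * ((lowerBidiagonal (b 1) * upperBidiagonal (a 1)) ^ m *
          upperBidiagonal (a 0)) := by
      rw [← (h 0).upper_mul_lower, ← mul_assoc, ← mul_pow_mul, pow_succ, mul_assoc]
    rw [hpow, corner_mul_of_lower fun f g => lowerBidiagonal_congr (b 0),
      corner_mul_of_upper _ fun j hj i hi => upperBidiagonal_single_of_lt (a 0) (hj.trans_le hi),
      Matrix.det_mul, Matrix.det_mul, det_corner_lowerBidiagonal, det_corner_upperBidiagonal,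
      one_mul, ih fun r => h (r + 1), Finset.prod_range_succ']

end Operators

lemma C_succ (N : ℕ) (k : ℤ) : C (N + 1) k = C N k + C N (k - 1) := by
  unfold C
  rcases lt_trichotomy k 0 with hk | rfl | hk
  · simp [hk.not_ge, show ¬ 1 ≤ k by omega]
  · simp
  · obtain ⟨l, rfl⟩ : ∃ l : ℕ, k = l + 1 := ⟨(k - 1).toNat, by omega⟩
    rw [if_pos (by omega), if_pos (by omega), if_pos (by omega),
      show ((l : ℤ) + 1).toNat = l + 1 by omega, show ((l : ℤ) + 1 - 1).toNat = l by omega,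
      Nat.choose_succ_succ, Nat.cast_add, add_comm]

lemma C_add_two (N : ℕ) (k : ℤ) : C (N + 2) k = C N k + 2 * C N (k - 1) + C N (k - 2) := by
  rw [C_succ, C_succ, C_succ N (k - 1), sub_sub, one_add_one_eq_two]
  ring

lemma C_symm_of_add_eq {N : ℕ} {k l : ℤ} (h : k + l = N) : C N k = C N l := by
  unfold C
  split_ifs with hk hl hl
  · rw [Nat.choose_symm_of_eq_add (a := k.toNat) (b := l.toNat) (by omega)]
  · rw [Nat.choose_eq_zero_of_lt (by omega), Nat.cast_zero]
  · rw [Nat.choose_eq_zero_of_lt (by omega), Nat.cast_zero]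
  · rfl

/-- The entry in row `i` and column `j` of the matrix, with `i` allowed to be any integer: the
number of paths of `2 m` steps `±1/2` from `j` to `i`, minus the number of those from the mirror
image `-1 - j` of `j` about `-1/2`. -/
def reflectedChoose (m : ℕ) (j i : ℤ) : ℚ :=
  C (2 * m) (j - i + m) - C (2 * m) (m - i - j - 1)

lemma reflectedChoose_zero (i j : ℕ) :
    reflectedChoose 0 j i = (Pi.single j 1 : ℕ → ℚ) i := by
  unfold reflectedChoose C
  rcases lt_trichotomy i j with h | rfl | h
  · rw [if_pos (by omega), if_neg (by omega), Nat.choose_eq_zero_of_lt (by omega)]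
    simp [h.ne]
  · simp [show ¬ 1 ≤ -(i : ℤ) - i by omega]
  · rw [if_neg (by omega), if_neg (by omega)]
    simp [h.ne']

lemma reflectedChoose_succ (m : ℕ) (j i : ℤ) :
    reflectedChoose (m + 1) j i =
      reflectedChoose m j (i - 1) + 2 * reflectedChoose m j i + reflectedChoose m j (i + 1) := by
  unfold reflectedChoose
  rw [mul_add_one, C_add_two, C_add_two]
  push_cast
  ring_nf

lemma reflectedChoose_neg_one (m : ℕ) (j : ℤ) :
    reflectedChoose m j (-1) = -reflectedChoose m j 0 := by
  unfold reflectedChoose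
  rw [C_symm_of_add_eq (k := j - -1 + m) (l := m - 0 - j - 1) (by push_cast; ring),
    C_symm_of_add_eq (k := j - 0 + m) (l := m - -1 - j - 1) (by push_cast; ring)]
  ring

/-- The operator `J` with `(J f) i = f (i - 1) + 2 f i + f (i + 1)`, where `f (-1)` is read as
`-f 0`; it is introduced in factored form. -/
def reflectedWalk (R : Type*) [CommRing R] : Module.End R (ℕ → R) :=
  lowerBidiagonal 1 * upperBidiagonal 1

lemma reflectedWalk_apply {R : Type*} [CommRing R] {F : ℤ → R} (hF : F (-1) = -F 0) (i : ℕ) :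
    reflectedWalk R (fun k => F k) i = F (i - 1) + 2 * F i + F (i + 1) := by
  rcases i with _ | i
  · simp only [reflectedWalk, Module.End.mul_apply, lowerBidiagonal_apply_zero,
      upperBidiagonal_apply, Pi.one_apply, Nat.cast_zero, zero_add, Nat.cast_one, zero_sub, hF]
    ring
  · simp only [reflectedWalk, Module.End.mul_apply, lowerBidiagonal_apply_succ,
      upperBidiagonal_apply, Pi.one_apply, Nat.cast_add, Nat.cast_one, add_sub_cancel_right]
    ring

lemma reflectedWalk_pow_single (m i j : ℕ) :
    (reflectedWalk ℚ ^ m) (Pi.single j 1) i = reflectedChoose m j i := by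
  induction m generalizing i with
  | zero => rw [pow_zero, Module.End.one_apply, reflectedChoose_zero]
  | succ m ih =>
    rw [pow_succ', Module.End.mul_apply, funext ih,
      reflectedWalk_apply (reflectedChoose_neg_one m j), reflectedChoose_succ]

/-- The diagonal entries of the upper factor after `r` quotient-difference steps from
`a = b = 1`. -/
def qdDiag (r k : ℕ) : ℚ :=
  (2 * k + 2 * r + 1) * (2 * k + 2 * r + 2) / ((2 * k + r + 1) * (2 * k + r + 2))

/-- The subdiagonal entries of the lower factor after `r` quotient-difference steps from
`a = b = 1`. -/
def qdSubdiag (r k : ℕ) : ℚ :=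
  (2 * k + 2) * (2 * k + 3) / ((2 * k + r + 2) * (2 * k + r + 3))

lemma qdDiag_zero : qdDiag 0 = 1 := by
  funext k
  simp only [qdDiag, Nat.cast_zero, mul_zero, add_zero, Pi.one_apply]
  exact div_self (by positivity)

lemma qdSubdiag_zero : qdSubdiag 0 = 1 := by
  funext k
  simp only [qdSubdiag, Nat.cast_zero, add_zero, Pi.one_apply]
  exact div_self (by positivity)

lemma isQDStep_qdDiag_qdSubdiag (r : ℕ) :
    IsQDStep (qdDiag r) (qdSubdiag r) (qdDiag (r + 1)) (qdSubdiag (r + 1)) where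
  add_zero := by
    simp only [qdDiag, qdSubdiag]
    push_cast
    field_simp
    ring
  add_succ k := by
    simp only [qdDiag, qdSubdiag]
    push_cast
    field_simp
    ring
  mul k := by
    simp only [qdDiag, qdSubdiag]
    push_cast
    field_simp
    ring

lemma prod_Icc_add_two_add {R : Type*} [CommSemiring R] (x : R) (s : ℕ) :
    (∏ i ∈ Finset.Icc 1 s, (x + 2 + i)) * ((x + 1) * (x + 2)) =
      (∏ i ∈ Finset.Icc 1 s, (x + i)) * ((x + s + 1) * (x + s + 2)) := by
  induction s with
  | zero => simp
  | succ s ih =>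
    rw [Finset.prod_Icc_succ_top (by omega), Finset.prod_Icc_succ_top (by omega),
      mul_right_comm, ih]
    push_cast
    ring

lemma prod_range_qdDiag (n r : ℕ) :
    ∏ k ∈ Finset.range n, qdDiag r k = ∏ i ∈ Finset.Icc 1 r, (2 * (n : ℚ) + i + r) / (i + r) := by
  have hne : ∏ i ∈ Finset.Icc 1 r, ((i : ℚ) + r) ≠ 0 := by
    refine Finset.prod_ne_zero_iff.mpr fun i hi => ?_
    have := (Finset.mem_Icc.mp hi).1
    positivity
  rw [Finset.prod_div_distrib]
  induction n with
  | zero => simp [hne]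
  | succ n ih =>
    have hshift := prod_Icc_add_two_add (2 * (n : ℚ) + r) r
    calc ∏ k ∈ Finset.range (n + 1), qdDiag r k
        = (∏ i ∈ Finset.Icc 1 r, (2 * (n : ℚ) + r + i)) / (∏ i ∈ Finset.Icc 1 r, ((i : ℚ) + r)) *
            qdDiag r n := by
          rw [Finset.prod_range_succ, ih]
          simp only [add_right_comm]
      _ = (∏ i ∈ Finset.Icc 1 r, (2 * (n : ℚ) + r + 2 + i)) /
            ∏ i ∈ Finset.Icc 1 r, ((i : ℚ) + r) := by
          rw [qdDiag, div_mul_div_comm, div_eq_div_iff (mul_ne_zero hne (by positivity)) hne]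
          linear_combination (-∏ i ∈ Finset.Icc 1 r, ((i : ℚ) + r)) * hshift
      _ = _ := by
          congr 1
          refine Finset.prod_congr rfl fun i _ => ?_
          push_cast
          ring

lemma prod_Icc_Icc_comm {M : Type*} [CommMonoid M] (N : ℕ) (f : ℕ → ℕ → M) :
    ∏ i ∈ Finset.Icc 1 N, ∏ j ∈ Finset.Icc i N, f i j =
      ∏ j ∈ Finset.range (N + 1), ∏ i ∈ Finset.Icc 1 j, f i j := by
  refine Finset.prod_comm' fun i j => ?_
  simp only [Finset.mem_Icc, Finset.mem_range]
  omega

theorem det_A_eq (n m : ℕ) (hm : 1 ≤ m) :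
    Matrix.det (Matrix.of fun i j : Fin n =>
      C (2 * m) ((j : ℤ) - (i : ℤ) + m) -
      C (2 * m) ((m : ℤ) - (i : ℤ) - (j : ℤ) - 1)) =
    ∏ i ∈ Finset.Icc 1 (m - 1), ∏ j ∈ Finset.Icc i (m - 1),
      ((2 * (n : ℚ) + i + j)) / ((i : ℚ) + j) := by
  calc _ = (corner n (reflectedWalk ℚ ^ m)).det := by
        congr 1
        ext i j
        exact (reflectedWalk_pow_single m i j).symm
    _ = ∏ r ∈ Finset.range m, ∏ k ∈ Finset.range n, qdDiag r k := by
        rw [← det_corner_lower_mul_upper_pow n m isQDStep_qdDiag_qdSubdiag, qdDiag_zero,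
          qdSubdiag_zero, reflectedWalk]
    _ = ∏ r ∈ Finset.range m, ∏ i ∈ Finset.Icc 1 r, (2 * (n : ℚ) + i + r) / (i + r) :=
        Finset.prod_congr rfl fun r _ => prod_range_qdDiag n r
    _ = _ := by rw [prod_Icc_Icc_comm, Nat.sub_add_cancel hm]
end

section
/- Let a, b, c be natural numbers, and for an integer k set u_k = C(a+b, a−k). Assume that b + 2i − j − 1 ≠ 0 for all integers i, j with 1 ≤ i ≤ c and 1 ≤ j ≤ a. Then the determinant of the c×c rational matrix whose (i,j)-entry (for 0 ≤ i, j ≤ c-1) is u_{i−j} + u_{i+j+1} equals ∏_{i=1}^{c} ∏_{j=1}^{a} ((b+i−j)(b+2i+j−1)) / ((b+2i−j−1)(i+j−1)). -/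
/-- `u a b k = C(a+b, a-k)`. -/
def u (a b : ℕ) (k : ℤ) : ℚ := C (a + b) ((a : ℤ) - k)

/-!
Right multiplication by the unitriangular matrix with entries `C(2j+1, j-l)` folds the Toeplitz and
the Hankel part together: by the Chu–Vandermonde identity the `(i,j)`-entry becomes the single
binomial coefficient `C(a+b+2j+1, a+j-i)`. Up to a factor depending only on `j`, this entry is the
value at `j` of `pᵢ(x) = (x+a)(x+a-1)⋯(x+a-i+1) · (x+b+2+i)(x+b+3+i)⋯(x+b+c)`. As `deg pᵢ < c`,
the determinant of the matrix `pᵢ(j)` is a constant times a Vandermonde determinant, so all nodes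
may be translated by `-a`; the matrix is then triangular because `pᵢ(j-a) = 0` for `j < i`.
The factorials on its diagonal combine with the column factors after splitting `{0, …, 2c-1}` once
into halves and once by parity, which turns `∏ (b+c+j)!` into `∏ (b+2j)! (b+2j+1)! / (b+j)!`.
-/

section PolynomialDeterminants

open Matrix Polynomial
open scoped Nat

variable {R : Type*} [CommRing R]

theorem det_eval_eq_det_coeff_mul_det_vandermonde {n : ℕ} {p : Fin n → R[X]}
    (hp : ∀ i, (p i).natDegree < n) (x : Fin n → R) :
    det (of fun i j => (p i).eval (x j)) =
      det (of fun i k : Fin n => (p i).coeff k) * det (vandermonde x) := by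
  rw [← det_transpose (vandermonde x), ← det_mul]
  congr 1
  ext i j
  rw [mul_apply, of_apply, eval_eq_sum_range' (hp i),
    ← Fin.sum_univ_eq_sum_range (fun k : ℕ => (p i).coeff k * x j ^ k) n]
  rfl

theorem det_eval_add_const {n : ℕ} {p : Fin n → R[X]} (hp : ∀ i, (p i).natDegree < n)
    (x : Fin n → R) (t : R) :
    det (of fun i j => (p i).eval (x j + t)) = det (of fun i j => (p i).eval (x j)) := by
  simp only [det_eval_eq_det_coeff_mul_det_vandermonde hp, det_vandermonde_add]

/-- The product `(x + α)(x + α - 1)⋯(x + α - i + 1) · (x + β + i)(x + β + i + 1)⋯(x + β + n - 1)`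
for `i ≤ n`. With `α = a`, `β = b + 2` and `n = c - 1`, its values at `0, …, n` are, up to factors
depending only on the column, the entries of row `i` of the folded matrix. -/
noncomputable def descAscPoly (α β : R) (n i : ℕ) : R[X] :=
  taylor α (descPochhammer R i) * taylor (β + i) (ascPochhammer R (n - i))

theorem eval_descAscPoly (α β : R) (n i : ℕ) (x : R) :
    (descAscPoly α β n i).eval x =
      (descPochhammer R i).eval (x + α) * (ascPochhammer R (n - i)).eval (x + (β + i)) := by
  rw [descAscPoly, eval_mul, taylor_eval, taylor_eval]

theorem natDegree_descAscPoly_le (α β : R) {n i : ℕ} (hi : i ≤ n) :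
    (descAscPoly α β n i).natDegree ≤ n := by
  have hdesc : (descPochhammer R i).natDegree ≤ i := by
    rw [← descPochhammer_map (Int.castRingHom R)]
    exact natDegree_map_le.trans (descPochhammer_natDegree ℤ i).le
  have hasc : (ascPochhammer R (n - i)).natDegree ≤ n - i := by
    rw [← ascPochhammer_map (Nat.castRingHom R)]
    exact natDegree_map_le.trans (ascPochhammer_natDegree ℕ (n - i)).le
  calc (descAscPoly α β n i).natDegree
      ≤ (descPochhammer R i).natDegree + (ascPochhammer R (n - i)).natDegree := by
        simpa only [descAscPoly, natDegree_taylor] using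
          natDegree_mul_le (p := taylor α (descPochhammer R i))
            (q := taylor (β + i) (ascPochhammer R (n - i)))
    _ ≤ n := by omega

theorem det_descAscPoly (α β : R) (c : ℕ) :
    det (of fun i j : Fin c => (descAscPoly α β (c - 1) i).eval (j : R)) =
      ∏ i ∈ Finset.range c,
        (i ! : R) * (ascPochhammer R (c - 1 - i)).eval (β - α + 2 * i) := by
  have hdeg (i : Fin c) : (descAscPoly α β (c - 1) i).natDegree < c :=
    (natDegree_descAscPoly_le α β (Nat.le_sub_one_of_lt i.2)).trans_lt
      (Nat.sub_one_lt_of_lt i.2)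
  rw [← det_eval_add_const hdeg _ (-α), det_of_isUpperTriangular, ← Fin.prod_univ_eq_prod_range]
  · refine Finset.prod_congr rfl fun i _ => ?_
    rw [of_apply, eval_descAscPoly, neg_add_cancel_right, descPochhammer_eval_eq_descFactorial,
      Nat.descFactorial_self]
    ring_nf
  · intro i j (hji : j < i)
    rw [of_apply, eval_descAscPoly, neg_add_cancel_right, descPochhammer_eval_coe_nat_of_lt hji,
      zero_mul]

end PolynomialDeterminants

section Folding

open Finset Matrix

variable {R : Type*} [CommRing R]

theorem sum_add_reflect_mul_choose (f : ℤ → R) (i : ℤ) (j : ℕ) :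
    ∑ l ∈ range (j + 1), (f (i - l) + f (i + l + 1)) * ((2 * j + 1).choose (j - l) : R) =
      ∑ m ∈ range (2 * j + 2), ((2 * j + 1).choose m : R) * f (i - j + m) := by
  rw [show 2 * j + 2 = (j + 1) + (j + 1) by ring, sum_range_add _ (j + 1),
    ← sum_range_reflect (fun m : ℕ => ((2 * j + 1).choose m : R) * f (i - j + m)),
    ← sum_add_distrib]
  refine sum_congr rfl fun l hl => ?_
  have hlj : l ≤ j := mem_range_succ_iff.mp hl
  have hsymm : (2 * j + 1).choose (j + 1 + l) = (2 * j + 1).choose (j - l) :=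
    Nat.choose_symm_of_eq_add (by omega)
  rw [hsymm, show j + 1 - 1 - l = j - l by omega, show i - j + ((j - l : ℕ) : ℤ) = i - l by omega,
    show i - j + ((j + 1 + l : ℕ) : ℤ) = i + l + 1 by omega]
  ring

theorem det_toeplitz_add_hankel_eq_det_sum_choose (f : ℤ → R) (c : ℕ) :
    det (of fun i j : Fin c => f ((i : ℤ) - (j : ℤ)) + f ((i : ℤ) + (j : ℤ) + 1)) =
      det (of fun i j : Fin c =>
        ∑ m ∈ range (2 * j + 2), ((2 * (j : ℕ) + 1).choose m : R) * f ((i : ℤ) - j + m)) := by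
  let U : Matrix (Fin c) (Fin c) R :=
    of fun l j => if l ≤ j then ((2 * (j : ℕ) + 1).choose (j - l) : R) else 0
  have hU : U.det = 1 := by
    have hUpper : U.IsUpperTriangular := fun i j (hji : j < i) => if_neg hji.not_ge
    simp [det_of_isUpperTriangular hUpper, U]
  rw [← mul_one (det _), ← hU, ← det_mul]
  congr 1
  ext i j
  let g (l : ℕ) : R :=
    (f ((i : ℤ) - l) + f ((i : ℤ) + l + 1)) * ((2 * (j : ℕ) + 1).choose (j - l) : R)
  calc _ = ∑ l : Fin c, if (l : ℕ) ≤ j then g l else 0 := by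
        simp only [mul_apply, U, of_apply, mul_ite, mul_zero, Fin.le_def, g]
    _ = ∑ l ∈ range (j + 1), g l := by
        rw [Fin.sum_univ_eq_sum_range (fun l => if l ≤ (j : ℕ) then g l else 0), ← sum_filter]
        congr 1
        ext l
        simp only [mem_filter, mem_range]
        omega
    _ = _ := sum_add_reflect_mul_choose f i j

end Folding

section Binomial

open Finset Matrix
open scoped Nat

theorem C_natCast (N k : ℕ) : C N k = N.choose k := by
  simp [C]

theorem C_of_neg (N : ℕ) {k : ℤ} (hk : k < 0) : C N k = 0 :=
  if_neg hk.not_ge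

theorem sum_choose_mul_C (n N : ℕ) (k : ℤ) :
    ∑ m ∈ range (n + 1), (n.choose m : ℚ) * C N (k - m) = C (N + n) k := by
  rcases lt_or_ge k 0 with hk | hk
  · rw [C_of_neg _ hk]
    exact sum_eq_zero fun m _ => by rw [C_of_neg _ (by omega), mul_zero]
  lift k to ℕ using hk
  rw [C_natCast, add_comm N n, Nat.add_choose_eq, Finset.Nat.sum_antidiagonal_eq_sum_range_succ_mk]
  push_cast
  refine sum_congr_of_eq_on_inter (fun m _ hm => ?_) (fun m _ hm => ?_) (fun m _ hm => ?_)
  · rw [C_of_neg _ (by simp only [mem_range] at hm; omega), mul_zero]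
  · rw [Nat.choose_eq_zero_of_lt (by simpa using hm), Nat.cast_zero, zero_mul]
  · rw [← Nat.cast_sub (mem_range_succ_iff.mp hm), C_natCast]

theorem sum_choose_mul_u (a b n : ℕ) (k : ℤ) :
    ∑ m ∈ range (n + 1), (n.choose m : ℚ) * u a b (k + m) = C (a + b + n) (a - k) := by
  simp only [← sum_choose_mul_C, u, sub_sub]

theorem C_add_sub_mul_factorial (n m : ℕ) {k i : ℕ} (hik : i ≤ k) :
    C (n + m) (n - i) * (n ! * (m + k)!) =
      (n + m)! * (n.descFactorial i * (m + i + 1).ascFactorial (k - i)) := by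
  rcases lt_or_ge n i with hni | hin
  · rw [C_of_neg _ (by omega), Nat.descFactorial_of_lt hni]
    simp
  have hchoose : (n + m).choose (n - i) * (n - i)! * (m + i)! = (n + m)! := by
    have := Nat.choose_mul_factorial_mul_factorial (show n - i ≤ n + m by omega)
    rwa [show n + m - (n - i) = m + i by omega] at this
  have hdesc : (n - i)! * n.descFactorial i = n ! := Nat.factorial_mul_descFactorial hin
  have hasc : (m + i)! * (m + i + 1).ascFactorial (k - i) = (m + k)! := by
    rw [Nat.factorial_mul_ascFactorial, show m + i + (k - i) = m + k by omega]
  rw [← Nat.cast_sub hin, C_natCast, ← hchoose, ← hdesc, ← hasc]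
  push_cast
  ring

theorem C_eq_mul_eval_descAscPoly (a b j : ℕ) {c i : ℕ} (hi : i < c) :
    C (a + b + (2 * j + 1)) (a - (i - j)) =
      ((a + b + 2 * j + 1)! : ℚ) / ((a + j)! * (b + c + j)!) *
        (descAscPoly (a : ℚ) (b + 2) (c - 1) i).eval (j : ℚ) := by
  have hdesc : (descPochhammer ℚ i).eval ((j : ℚ) + a) = (a + j).descFactorial i := by
    rw [← descPochhammer_eval_eq_descFactorial]
    push_cast
    ring_nf
  have hasc : (ascPochhammer ℚ (c - 1 - i)).eval ((j : ℚ) + (b + 2 + i)) =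
      (b + 1 + j + i + 1).ascFactorial (c - 1 - i) := by
    rw [← ascPochhammer_nat_eq_natCast_ascFactorial]
    push_cast
    ring_nf
  have hC := C_add_sub_mul_factorial (a + j) (b + 1 + j) (Nat.le_sub_one_of_lt hi)
  rw [show a + j + (b + 1 + j) = a + b + 2 * j + 1 by ring,
    show b + 1 + j + (c - 1) = b + c + j by omega,
    show ((a + j : ℕ) : ℤ) - i = a - (i - j) by push_cast; ring] at hC
  rw [eval_descAscPoly, hdesc, hasc, div_mul_eq_mul_div, eq_div_iff (by positivity), ← hC,
    ← add_assoc]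

theorem det_toeplitz_add_hankel_u_eq_prod (a b c : ℕ) :
    det (of fun i j : Fin c => u a b ((i : ℤ) - (j : ℤ)) + u a b ((i : ℤ) + (j : ℤ) + 1)) =
      (∏ j ∈ range c, ((a + b + 2 * j + 1)! : ℚ) / ((a + j)! * (b + c + j)!)) *
        ∏ i ∈ range c, (i ! : ℚ) * (ascPochhammer ℚ (c - 1 - i)).eval (b + 2 - a + 2 * i : ℚ) := by
  rw [det_toeplitz_add_hankel_eq_det_sum_choose, ← det_descAscPoly,
    ← Fin.prod_univ_eq_prod_range, ← det_mul_row]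
  congr 1
  ext i j
  rw [of_apply, of_apply, sum_choose_mul_u, of_apply, C_eq_mul_eval_descAscPoly a b j i.2]

end Binomial

section Products

open Finset
open scoped Nat

theorem prod_range_mul_prod_range_add {M : Type*} [CommMonoid M] (f : ℕ → M) (n : ℕ) :
    (∏ j ∈ range n, f j) * ∏ j ∈ range n, f (n + j) =
      ∏ j ∈ range n, f (2 * j) * f (2 * j + 1) := by
  rw [← prod_range_add, ← two_mul]
  induction n with
  | zero => rfl
  | succ n ih =>
    rw [prod_range_succ _ n, ← ih, ← mul_assoc, ← prod_range_succ, ← prod_range_succ]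
    rfl

variable {K : Type*} [Field K] [CharZero K]

theorem prod_range_factorial_add (e n : ℕ) :
    ∏ j ∈ range n, ((e + n + j)! : K) =
      ∏ j ∈ range n, ((e + 2 * j)! * (e + 2 * j + 1)! : K) / (e + j)! := by
  have hne : ∏ j ∈ range n, ((e + j)! : K) ≠ 0 :=
    prod_ne_zero_iff.mpr fun j _ => Nat.cast_ne_zero.mpr (Nat.factorial_ne_zero _)
  rw [prod_div_distrib, eq_div_iff hne, mul_comm]
  simpa only [add_assoc] using prod_range_mul_prod_range_add (fun j => ((e + j)! : K)) n

theorem prod_Icc_add_eq_factorial_div (m n : ℕ) :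
    ∏ j ∈ Icc 1 n, ((m : K) + j) = (m + n)! / m ! := by
  rw [eq_div_iff (Nat.cast_ne_zero.mpr (Nat.factorial_ne_zero m))]
  induction n with
  | zero => simp
  | succ n ih =>
    rw [prod_Icc_succ_top (by omega), mul_right_comm, ih, ← add_assoc, Nat.factorial_succ]
    push_cast
    ring

theorem prod_Icc_sub_eq_factorial_div (m n : ℕ) :
    ∏ j ∈ Icc 1 n, ((m : K) + n + 1 - j) = (m + n)! / m ! := by
  have hreflect := prod_Ico_reflect (fun j => (m : K) + j) 1 (Nat.le_succ (n + 1))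
  rw [← prod_Icc_add_eq_factorial_div, ← Ico_add_one_right_eq_Icc]
  refine .trans (prod_congr rfl fun j hj => ?_) (by simpa using hreflect)
  rw [Nat.cast_sub (mem_Ico.mp hj).2.le]
  push_cast
  ring

theorem prod_Icc_div_eq_factorial_div (a d i : ℕ) :
    ∏ j ∈ Icc 1 a, (((a + d : ℕ) + (i + 1 : ℕ) - j : K) * ((a + d : ℕ) + 2 * (i + 1 : ℕ) + j - 1)) /
        (((a + d : ℕ) + 2 * (i + 1 : ℕ) - j - 1) * ((i + 1 : ℕ) + j - 1)) =
      ((d + i + a)! / (d + i)! * ((a + d + 2 * i + 1 + a)! / (a + d + 2 * i + 1)!)) /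
        ((d + 2 * i + a)! / (d + 2 * i)! * ((i + a)! / i !)) := by
  rw [← prod_Icc_sub_eq_factorial_div (d + i), ← prod_Icc_add_eq_factorial_div (a + d + 2 * i + 1),
    ← prod_Icc_sub_eq_factorial_div (d + 2 * i), ← prod_Icc_add_eq_factorial_div i,
    ← prod_mul_distrib, ← prod_mul_distrib, ← prod_div_distrib]
  refine prod_congr rfl fun j _ => ?_
  push_cast
  congr 2 <;> ring

theorem eval_ascPochhammer_eq_factorial_div (m n : ℕ) :
    (ascPochhammer K n).eval ((m : K) + 1) = (m + n)! / m ! := by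
  rw [eq_div_iff (Nat.cast_ne_zero.mpr (Nat.factorial_ne_zero m)), mul_comm]
  exact factorial_mul_ascPochhammer K m n

theorem prod_factorial_mul_eval_ascPochhammer (d c : ℕ) :
    ∏ i ∈ range c, (i ! : K) * (ascPochhammer K (c - 1 - i)).eval ((d : K) + 2 + 2 * i) =
      ∏ i ∈ range c, (i ! : K) * ((d + c + i)! / (d + 2 * i + 1)!) := by
  refine prod_congr rfl fun i hi => ?_
  have hic : d + 2 * i + 1 + (c - 1 - i) = d + c + i := by
    have := mem_range.mp hi
    omega
  rw [← hic, ← eval_ascPochhammer_eq_factorial_div]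
  push_cast
  ring_nf

theorem prod_factorial_eq_prod_Icc (a d c : ℕ) :
    (∏ j ∈ range c, ((a + (a + d) + 2 * j + 1)! : K) / ((a + j)! * (a + d + c + j)!)) *
        ∏ i ∈ range c, (i ! : K) * ((d + c + i)! / (d + 2 * i + 1)!) =
      ∏ i ∈ Icc 1 c, ∏ j ∈ Icc 1 a, (((a + d : ℕ) + i - j : K) * ((a + d : ℕ) + 2 * i + j - 1)) /
        (((a + d : ℕ) + 2 * i - j - 1) * (i + j - 1)) := by
  have hfact (n : ℕ) : (n ! : K) ≠ 0 := Nat.cast_ne_zero.mpr (Nat.factorial_ne_zero n)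
  calc
    _ = ∏ i ∈ range c,
          ((a + (a + d) + 2 * i + 1)! : K) /
              ((a + i)! * ((a + d + 2 * i)! * (a + d + 2 * i + 1)! / (a + d + i)!)) *
            (i ! * ((d + 2 * i)! * (d + 2 * i + 1)! / (d + i)! / (d + 2 * i + 1)!)) := by
      simp only [prod_mul_distrib, prod_div_distrib, prod_range_factorial_add]
    _ = ∏ i ∈ range c,
          ((d + i + a)! / (d + i)! * ((a + d + 2 * i + 1 + a)! / (a + d + 2 * i + 1)!)) /
            ((d + 2 * i + a)! / (d + 2 * i)! * ((i + a)! / i !) : K) := by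
      refine prod_congr rfl fun i _ => ?_
      rw [show a + (a + d) + 2 * i + 1 = a + d + 2 * i + 1 + a by ring, add_comm a i,
        show d + i + a = a + d + i by ring, show d + 2 * i + a = a + d + 2 * i by ring]
      field_simp [hfact]
    _ = _ := by
      rw [← Ico_add_one_right_eq_Icc 1 c, prod_Ico_eq_prod_range, Nat.add_sub_cancel]
      refine prod_congr rfl fun i _ => ?_
      rw [add_comm 1 i, prod_Icc_div_eq_factorial_div]

end Products

theorem det_toeplitz_plus_hankel (a b c : ℕ)
    (h : ∀ i j : ℤ, 1 ≤ i → i ≤ c → 1 ≤ j → j ≤ a → (b : ℤ) + 2 * i - j - 1 ≠ 0) :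
    Matrix.det (Matrix.of fun i j : Fin c =>
      u a b ((i : ℤ) - (j : ℤ)) + u a b ((i : ℤ) + (j : ℤ) + 1)) =
    ∏ i ∈ Finset.Icc 1 c, ∏ j ∈ Finset.Icc 1 a,
      (((b : ℚ) + i - j) * ((b : ℚ) + 2 * i + j - 1)) /
      ((((b : ℚ) + 2 * i - j - 1)) * ((i : ℚ) + j - 1)) := by
  rcases Nat.eq_zero_or_pos c with rfl | hc
  · simp
  have hab : a ≤ b := by
    by_contra hba
    exact h 1 (b + 1) le_rfl (by omega) (by omega) (by omega) (by ring)
  obtain ⟨d, rfl⟩ := Nat.exists_eq_add_of_le hab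
  have hd : ((a + d : ℕ) : ℚ) + 2 - a = d + 2 := by
    push_cast
    ring
  rw [det_toeplitz_add_hankel_u_eq_prod, hd, prod_factorial_mul_eval_ascPochhammer,
    prod_factorial_eq_prod_Icc]
end

section
/- Let a, b be natural numbers and let c ≥ 1 be a natural number. Consider the polynomial P in ℚ[t_0, …, t_{c-1}] given by P = ∏_{i=0}^{c-1} (1+t_i)^{a+b} · ∏_{0 ≤ i < j ≤ c-1} (t_i − t_j)^2. Then the coefficient in P of the monomial ∏_{i=0}^{c-1} t_i^{b+c-1} equals (−1)^{c(c−1)/2} · ∏_{ℓ=0}^{c-1} ((a+b+ℓ)!·(ℓ+1)!) / ((a+ℓ)!·(b+ℓ)!). -/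
open MvPolynomial

/-!
Up to sign, `∏ i < j, (t i - t j) ^ 2` is a product of two Vandermonde determinants, one in the
`t i` with reversed columns and one in the `1 + t i`. Absorbing `∏ i, (1 + t i) ^ (a + b)` into the
rows of the second writes the polynomial as `± det (p j (t i)) * det (q j (t i))` with
`p j = X ^ (c - 1 - j)` and `q j = (1 + X) ^ (a + b + j)`. The coefficient form of Andréief's
identity turns the coefficient of `∏ i, t i ^ (b + c - 1)` into `c !` times the determinant of the
coefficients of `p i * q j`, which are the binomials `(a + b + j).choose (b + i)`. Rescaling rows
and columns makes these the falling factorials `(a + j).descFactorial i`, whose determinant is again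
of Vandermonde type.
-/

section Andreief

open scoped Polynomial Nat

variable {ι κ R : Type*} [Fintype ι]

lemma coeff_prod_toMvPolynomial [CommSemiring R] (e : ι ≃ κ) (p : ι → R[X]) (m : κ →₀ ℕ) :
    coeff m (∏ i, (p i).toMvPolynomial (e i)) = ∏ i, (p i).coeff (m (e i)) := by
  classical
  have expand (i : ι) : (p i).toMvPolynomial (e i) =
      ∑ k ∈ (p i).support, monomial (Finsupp.single (e i) k) ((p i).coeff k) := by
    simp only [Polynomial.toMvPolynomial, Polynomial.aeval_def, Polynomial.eval₂_eq_sum,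
      Polynomial.sum_def, algebraMap_eq, C_mul_X_pow_eq_monomial]
  simp only [expand, Finset.prod_univ_sum, coeff_sum, ← monomial_sum_prod, coeff_monomial]
  have exponent_apply (k : ι → ℕ) (i : ι) : (∑ j, Finsupp.single (e j) (k j)) (e i) = k i := by
    simp [Finsupp.finsetSum_apply, Finsupp.single_apply]
  have exponent_eq_iff (k : ι → ℕ) :
      ∑ i, Finsupp.single (e i) (k i) = m ↔ k = fun i ↦ m (e i) := by
    rw [DFunLike.ext_iff, ← e.forall_congr_right, _root_.funext_iff]
    simp only [exponent_apply]
  simp only [exponent_eq_iff, Finset.sum_ite_eq', Fintype.mem_piFinset, Polynomial.mem_support_iff]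
  split_ifs with h
  · rfl
  · obtain ⟨i, hi⟩ := not_forall_not.mp (by simpa using h)
    exact (Finset.prod_eq_zero (Finset.mem_univ i) hi).symm

variable [DecidableEq ι] [CommRing R]

lemma coeff_det_toMvPolynomial (e : ι ≃ κ) (P : ι → ι → R[X]) (m : κ →₀ ℕ) :
    coeff m (Matrix.of fun i j ↦ (P i j).toMvPolynomial (e i)).det =
      (Matrix.of fun i j ↦ (P i j).coeff (m (e i))).det := by
  simp only [Matrix.det_apply, Matrix.of_apply, coeff_sum]
  refine Finset.sum_congr rfl fun τ _ ↦ ?_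
  rw [Units.smul_def, Units.smul_def, coeff_smul]
  exact congrArg _ (coeff_prod_toMvPolynomial (τ.trans e) (fun i ↦ P (τ i) i) m)

lemma det_mul_det_eq_sum_perm (A B : Matrix ι ι R) :
    A.det * B.det = ∑ σ : Equiv.Perm ι, (Matrix.of fun i j ↦ A (σ i) i * B (σ i) j).det := by
  rw [Matrix.det_apply', Finset.sum_mul]
  refine Finset.sum_congr rfl fun σ _ ↦ ?_
  calc
    _ = (∏ i, A (σ i) i) * (B.submatrix σ id).det := by rw [Matrix.det_permute]; ring
    _ = _ := (Matrix.det_mul_column (fun i ↦ A (σ i) i) (B.submatrix σ id)).symm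

/- Andréief's identity, with "coefficient of `X ^ k`" in the role of the integral. -/
lemma coeff_det_mul_det_toMvPolynomial (p q : ι → R[X]) (k : ℕ) :
    coeff (Finsupp.equivFunOnFinite.symm fun _ ↦ k)
        ((Matrix.of fun i j ↦ (p j).toMvPolynomial i).det *
          (Matrix.of fun i j ↦ (q j).toMvPolynomial i).det) =
      (Fintype.card ι)! * (Matrix.of fun i j ↦ (p i * q j).coeff k).det := by
  simp only [det_mul_det_eq_sum_perm, Matrix.of_apply, ← map_mul, coeff_sum,
    coeff_det_toMvPolynomial, Finsupp.equivFunOnFinite_symm_apply_apply, Finset.sum_const,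
    Finset.card_univ, Fintype.card_perm, nsmul_eq_mul]

end Andreief

section Determinants

open scoped Nat

lemma prod_prod_Ioi_const {M : Type*} [CommMonoid M] (n : ℕ) (x : M) :
    ∏ i : Fin n, ∏ _j ∈ Finset.Ioi i, x = x ^ (n * (n - 1) / 2) := by
  simp only [Finset.prod_const, Fin.card_Ioi]
  rw [Finset.prod_pow_eq_pow_sum, ← Finset.sum_range (fun i ↦ n - 1 - i),
    Finset.sum_range_reflect (fun i ↦ i), Finset.sum_range_id]

variable {R : Type*} [CommRing R]

lemma prod_prod_Ioi_sub_sq_eq_det_mul_det {n : ℕ} (v : Fin n → R) :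
    ∏ i, ∏ j ∈ Finset.Ioi i, (v i - v j) ^ 2 =
      (-1) ^ (n * (n - 1) / 2) *
        ((Matrix.projVandermonde 1 v).det * (Matrix.vandermonde v).det) := by
  rw [← prod_prod_Ioi_const, Matrix.det_projVandermonde, Matrix.det_vandermonde]
  simp only [← Finset.prod_mul_distrib, Pi.one_apply]
  refine Finset.prod_congr rfl fun i _ ↦ Finset.prod_congr rfl fun j _ ↦ ?_
  ring

lemma prod_one_add_pow_mul_prod_sub_sq_eq_det_mul_det {n : ℕ} (N : ℕ) (v : Fin n → R) :
    (∏ i, (1 + v i) ^ N) * ∏ i, ∏ j ∈ Finset.Ioi i, (v i - v j) ^ 2 =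
      (-1) ^ (n * (n - 1) / 2) *
        ((Matrix.of fun i j : Fin n ↦ v i ^ (j.rev : ℕ)).det *
          (Matrix.of fun i j : Fin n ↦ (1 + v i) ^ (N + j)).det) := by
  have rev_powers : Matrix.projVandermonde 1 v =
      Matrix.of fun i j : Fin n ↦ v i ^ (j.rev : ℕ) := by
    ext i j
    simp [Matrix.projVandermonde_apply]
  have shifted_powers : (Matrix.of fun i j : Fin n ↦ (1 + v i) ^ (N + j)).det =
      (∏ i, (1 + v i) ^ N) * (Matrix.vandermonde v).det := by
    rw [← Matrix.det_vandermonde_add v 1, ← Matrix.det_mul_column]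
    simp only [Matrix.vandermonde_apply, pow_add, add_comm]
  rw [prod_prod_Ioi_sub_sq_eq_det_mul_det, rev_powers, shifted_powers]
  ring

lemma det_descFactorial_add (a n : ℕ) :
    (Matrix.of fun i j : Fin n ↦ ((a + j).descFactorial i : R)).det =
      ∏ l ∈ Finset.range n, (l ! : R) := by
  have over_int : (Matrix.of fun i j : Fin n ↦ ((a + j).descFactorial i : ℤ)).det =
      ∏ l ∈ Finset.range n, (l ! : ℤ) := by
    calc
      _ = (Matrix.of fun i j : Fin n ↦ (descPochhammer ℤ j).eval (i + a : ℤ)).det := by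
        rw [← Matrix.det_transpose]
        congr 1
        ext i j
        simp [← descPochhammer_eval_eq_descFactorial, add_comm]
      _ = (Matrix.vandermonde fun i : Fin n ↦ (i : ℤ)).det := by
        rw [← Matrix.det_eval_matrixOfPolynomials_eq_det_vandermonde _ _
          (fun _ ↦ descPochhammer_natDegree _ _) (fun _ ↦ monic_descPochhammer _ _),
          Matrix.det_vandermonde_add]
      _ = _ := by
        cases n with
        | zero => simp
        | succ n => simp [Matrix.det_vandermonde_id_eq_superFactorial,
            ← Nat.prod_range_succ_factorial]
  simpa [Int.cast_det, Matrix.map] using congrArg (Int.cast (R := R)) over_int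

lemma factorial_mul_factorial_mul_choose_add (n k i : ℕ) :
    n ! * (k + i)! * (n + k).choose (k + i) = (n + k)! * n.descFactorial i := by
  rcases le_or_gt i n with hi | hi
  · apply Nat.eq_of_mul_eq_mul_right (Nat.factorial_pos (n - i))
    have choose_eq := Nat.choose_mul_factorial_mul_factorial (by lia : k + i ≤ n + k)
    rw [show n + k - (k + i) = n - i by lia] at choose_eq
    linear_combination n ! * choose_eq - (n + k)! * Nat.factorial_mul_descFactorial hi
  · rw [Nat.choose_eq_zero_of_lt (by lia), Nat.descFactorial_of_lt hi, mul_zero, mul_zero]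

lemma det_choose_mul_prod_factorial (a b n : ℕ) :
    (Matrix.of fun i j : Fin n ↦ ((a + b + j).choose (b + i) : R)).det *
        ∏ l ∈ Finset.range n, ((a + l)! * (b + l)! : R) =
      ∏ l ∈ Finset.range n, ((a + b + l)! * l ! : R) := by
  have entry (i j : Fin n) :
      ((b + i)! : R) * ((a + j)! * (a + b + j).choose (b + i)) =
        (a + b + j)! * (a + j).descFactorial i := by
    have h := factorial_mul_factorial_mul_choose_add (a + j) b i
    rw [add_right_comm a j b] at h
    rw [← mul_assoc, mul_comm ((b + i)! : R)]
    simpa only [Nat.cast_mul] using congrArg (Nat.cast (R := R)) h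
  simp only [Finset.prod_mul_distrib, Finset.prod_range]
  calc
    _ = (Matrix.of fun i j : Fin n ↦
        ((b + i)! : R) * ((a + j)! * (a + b + j).choose (b + i))).det := by
      have scale_rows := Matrix.det_mul_column (fun i : Fin n ↦ ((b + i)! : R))
        (Matrix.of fun i j : Fin n ↦ ((a + j)! * (a + b + j).choose (b + i) : R))
      have scale_columns := Matrix.det_mul_row (fun j : Fin n ↦ ((a + j)! : R))
        (Matrix.of fun i j : Fin n ↦ ((a + b + j).choose (b + i) : R))
      simp only [Matrix.of_apply] at scale_rows scale_columns
      rw [scale_rows, scale_columns]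
      ring
    _ = (∏ j : Fin n, ((a + b + j)! : R)) *
        (Matrix.of fun i j : Fin n ↦ ((a + j).descFactorial i : R)).det := by
      simp only [entry]
      exact Matrix.det_mul_row _ (Matrix.of fun i j : Fin n ↦ ((a + j).descFactorial i : R))
    _ = _ := by rw [det_descFactorial_add, Finset.prod_range]

end Determinants

section ConstantTerm

open scoped Polynomial Nat

lemma coeff_X_pow_rev_mul_one_add_X_pow {R : Type*} [CommSemiring R] (b : ℕ) {c : ℕ} (N : ℕ)
    (i : Fin c) :
    (Polynomial.X ^ (i.rev : ℕ) * (1 + Polynomial.X) ^ N : R[X]).coeff (b + c - 1) =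
      N.choose (b + i) := by
  rw [show b + c - 1 = b + i + i.rev by rw [Fin.val_rev]; lia, Polynomial.coeff_X_pow_mul,
    Polynomial.coeff_one_add_X_pow]

theorem morris_m_eq_one_general (R : Type*) [CommRing R] (a b c : ℕ) :
    MvPolynomial.coeff (Finsupp.equivFunOnFinite.symm fun _ : Fin c ↦ b + c - 1)
        ((∏ i : Fin c, (1 + X i) ^ (a + b)) *
          ∏ i : Fin c, ∏ j ∈ Finset.Ioi i, (X i - X j) ^ 2 : MvPolynomial (Fin c) R) *
        ∏ l ∈ Finset.range c, ((a + l)! * (b + l)! : R) =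
      (-1) ^ (c * (c - 1) / 2) *
        ∏ l ∈ Finset.range c, ((a + b + l)! * (l + 1)! : R) := by
  have andreief := coeff_det_mul_det_toMvPolynomial
    (fun j : Fin c ↦ (Polynomial.X ^ (j.rev : ℕ) : R[X]))
    (fun j ↦ (1 + Polynomial.X) ^ (a + b + j)) (b + c - 1)
  simp only [map_pow, map_add, map_one, Polynomial.toMvPolynomial_X,
    coeff_X_pow_rev_mul_one_add_X_pow, Fintype.card_fin] at andreief
  have sign_eq_C : (-1 : MvPolynomial (Fin c) R) ^ (c * (c - 1) / 2) =
      C ((-1) ^ (c * (c - 1) / 2)) := by simp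
  have factorial_eq_prod : (c ! : R) = ∏ l ∈ Finset.range c, ((l + 1 : ℕ) : R) := by
    rw [← Finset.prod_range_add_one_eq_factorial, Nat.cast_prod]
  rw [prod_one_add_pow_mul_prod_sub_sq_eq_det_mul_det, sign_eq_C, coeff_C_mul, andreief,
    mul_assoc, mul_assoc, det_choose_mul_prod_factorial, factorial_eq_prod,
    ← Finset.prod_mul_distrib]
  simp only [Nat.factorial_succ, Nat.cast_mul, mul_left_comm]

end ConstantTerm

theorem morris_m_eq_one (a b c : ℕ) (hc : 1 ≤ c) :
    MvPolynomial.coeff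
      (Finsupp.equivFunOnFinite.symm fun _ : Fin c => b + c - 1)
      ((∏ i : Fin c, (1 + X i) ^ (a + b)) *
        ∏ i : Fin c, ∏ j ∈ Finset.Ioi i, (X i - X j) ^ 2 : MvPolynomial (Fin c) ℚ) =
    (-1 : ℚ) ^ (c * (c - 1) / 2) *
      ∏ l ∈ Finset.range c,
        (((a + b + l).factorial * (l + 1).factorial : ℚ)) /
        (((a + l).factorial * (b + l).factorial : ℚ)) := by
  rw [Finset.prod_div_distrib, ← mul_div_assoc, eq_div_iff (by positivity)]
  exact morris_m_eq_one_general ℚ a b c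
end
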